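/- (Information-theoretic version of the main p-resetting biasing theorem.) Let D be a PMF on a countable set α, n ∈ ℕ, p ∈ (0,1), f : α^n → [0,1], μ = E_{z←D^n}[f(z)] and ν = Var_{z←D^n}[f(z)]. Then there exists a PMF Ŝ on α^n such that: (i) the support of Ŝ is contained in the support of D^n; (ii) for every i ∈ {1,…,n} and every prefix (d_1,…,d_{i−1}) with positive Ŝ-prefix-marginal probability, there exists a function ρ : α → [0,1] such that for every d ∈ α, Pr_Ŝ[z_i = d | z_1 = d_1,…,z_{i−1} = d_{i−1}] = D(d)·(1 − p·ρ(d) + p·E_{d'←D}[ρ(d')]); and (iii) E_{z←Ŝ}[f(z)] ≥ μ + p·ν/(1 + p·μ). (Condition (ii) expresses that Ŝ is achievable by a p-resetting attack: with probability 1−p the sample is kept, and with probability p it is kept with probability 1−ρ(d) or replaced by a fresh sample from D with probability ρ(d).) -/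

import Mathlib

/-!
The distribution `Ŝ(z) = S(z)·(1 + p·f(z)) / (1 + p·μ)` works, and attains the bound with equality:
`E_Ŝ[f] = (μ + p·E_S[f²]) / (1 + p·μ) = μ + p·ν / (1 + p·μ)`.

Write `m` for the conditional mean of `f` under `S` given a prefix, and `m_a` for the conditional
mean once the next coordinate is fixed to `a`. Since `S` is a product, the conditional `Ŝ`-probability
of `a` is `D(a)·(1 + p·m_a) / (1 + p·m)`. With `ρ(a) = (1 - m_a) / (1 + p·m) ∈ [0,1]` and
`E_D[m_a] = m`, this equals `D(a)·(1 - p·ρ(a) + p·E_D[ρ])`.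

The two facts about prefix marginals behind this are `prefixProb_prod_update` (independence of the
next coordinate under a product distribution) and `hasSum_prefixProb_update` (the law of total
probability over the next coordinate).
-/

open scoped Classical

/-- `prefixProb T i d` is the probability, under the (sub)probability mass
function `T` on `α^n`, of the event that the first `i` coordinates agree with
those of `d` (the prefix marginal of `T` at the length-`i` prefix of `d`). -/
noncomputable def prefixProb {α : Type*} {n : ℕ} (T : (Fin n → α) → ℝ)
    (i : ℕ) (d : Fin n → α) : ℝ :=
  ∑' z : Fin n → α, if ∀ j : Fin n, (j : ℕ) < i → z j = d j then T z else 0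

theorem hasSum_mul_of_nonneg {β γ : Type*} {u : β → ℝ} {v : γ → ℝ} {s t : ℝ}
    (hu : HasSum u s) (hv : HasSum v t) (hu0 : ∀ x, 0 ≤ u x) (hv0 : ∀ y, 0 ≤ v y) :
    HasSum (fun x : β × γ => u x.1 * v x.2) (s * t) :=
  hu.mul hv (hu.summable.mul_of_nonneg hv.summable hu0 hv0)

/-- A product of convergent nonnegative series is the series, over all tuples of indices, of the
products of the terms. -/
theorem hasSum_pi_prod {α : Type*} : ∀ {n : ℕ} (g : Fin n → α → ℝ) (c : Fin n → ℝ),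
    (∀ j a, 0 ≤ g j a) → (∀ j, HasSum (g j) (c j)) →
    HasSum (fun z : Fin n → α => ∏ j, g j (z j)) (∏ j, c j) := by
  intro n
  induction n with
  | zero =>
    intro g c _ _
    simp
  | succ n ih =>
    intro g c h0 hs
    have h1 : HasSum (fun z : Fin n → α => ∏ j : Fin n, g j.succ (z j))
        (∏ j : Fin n, c j.succ) :=
      ih (fun j => g j.succ) (fun j => c j.succ) (fun j a => h0 (Fin.succ j) a)
        (fun j => hs (Fin.succ j))
    have h2 := hasSum_mul_of_nonneg (hs 0) h1 (h0 0)
      fun z => Finset.prod_nonneg fun j _ => h0 (Fin.succ j) (z j)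
    rw [Fin.prod_univ_succ, ← (Fin.consEquiv (fun _ : Fin (n + 1) => α)).hasSum_iff]
    refine h2.congr_fun ?_
    intro x
    simp [Fin.prod_univ_succ, Fin.consEquiv]

theorem prefixProb_prod {α : Type*} {n : ℕ} (D : α → ℝ) (hD0 : ∀ a, 0 ≤ D a) (hD1 : HasSum D 1)
    (i : ℕ) (d : Fin n → α) :
    prefixProb (fun z : Fin n → α => ∏ j, D (z j)) i d
      = ∏ j : Fin n, if (j : ℕ) < i then D (d j) else 1 := by
  have h := hasSum_pi_prod (fun (j : Fin n) a => if (j : ℕ) < i → a = d j then D a else 0)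
    (fun j => if (j : ℕ) < i then D (d j) else 1)
    (fun j a => by split_ifs; exacts [hD0 a, le_rfl])
    (fun j => by
      by_cases hj : (j : ℕ) < i
      · simp only [hj, forall_const, if_true]
        exact (hasSum_ite_eq (d j) (D (d j))).congr_fun
          (fun a => by split_ifs with h <;> simp [h])
      · simpa [hj] using hD1)
  rw [← h.tsum_eq]
  unfold prefixProb
  refine tsum_congr fun z => ?_
  rw [Finset.prod_ite_zero]
  simp

theorem prefixProb_prod_update {α : Type*} {n : ℕ} (D : α → ℝ) (hD0 : ∀ a, 0 ≤ D a)
    (hD1 : HasSum D 1) (k : Fin n) (d : Fin n → α) (a : α) :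
    prefixProb (fun z : Fin n → α => ∏ j, D (z j)) (k + 1) (Function.update d k a)
      = D a * prefixProb (fun z : Fin n → α => ∏ j, D (z j)) k d := by
  rw [prefixProb_prod D hD0 hD1, prefixProb_prod D hD0 hD1]
  have : D a = ∏ j : Fin n, if j = k then D a else 1 := by simp
  conv_rhs => rw [this]
  rw [← Finset.prod_mul_distrib]
  refine Finset.prod_congr rfl fun j _ => ?_
  by_cases hjk : j = k
  · subst hjk; simp
  · have h1 : (j : ℕ) ≠ k := fun h => hjk (Fin.ext h)
    have h2 : (j : ℕ) < k + 1 ↔ (j : ℕ) < k := by omega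
    simp [hjk, h2]

theorem summable_prefix {α : Type*} {n : ℕ} {T : (Fin n → α) → ℝ} (hT : Summable T)
    (i : ℕ) (d : Fin n → α) :
    Summable (fun z => if ∀ j : Fin n, (j : ℕ) < i → z j = d j then T z else 0) := by
  refine (hT.indicator {z | ∀ j : Fin n, (j : ℕ) < i → z j = d j}).congr fun z => ?_
  simp [Set.indicator_apply]

theorem hasSum_prefixProb_update {α : Type*} {n : ℕ} {T : (Fin n → α) → ℝ} (hT : Summable T)
    (k : Fin n) (d : Fin n → α) :
    HasSum (fun a => prefixProb T (k + 1) (Function.update d k a)) (prefixProb T k d) := by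
  have h := (summable_prefix hT k d).hasSum.tsum_fiberwise (fun z : Fin n → α => z k)
  refine h.congr_fun fun a => ?_
  rw [tsum_subtype ((fun z : Fin n → α => z k) ⁻¹' {a})
    (fun z => if ∀ j : Fin n, (j : ℕ) < k → z j = d j then T z else 0)]
  unfold prefixProb
  refine tsum_congr fun z => ?_
  rw [Set.indicator_apply, ← ite_and]
  refine if_congr ?_ rfl rfl
  simp only [Set.mem_preimage, Set.mem_singleton_iff]
  constructor
  · intro hz
    refine ⟨by simpa using hz k (Nat.lt_succ_self _), fun j hj => ?_⟩
    have hjk : j ≠ k := fun h => by subst h; exact lt_irrefl _ hj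
    simpa [hjk] using hz j (by omega)
  · rintro ⟨hk, hz⟩ j hj
    by_cases hjk : j = k
    · subst hjk; simpa using hk
    · have h1 : (j : ℕ) ≠ k := fun h => hjk (Fin.ext h)
      simpa [hjk] using hz j (by omega)

theorem prefixProb_mono {α : Type*} {n : ℕ} {T U : (Fin n → α) → ℝ} (hT : Summable T)
    (hU : Summable U) (h : ∀ z, T z ≤ U z) (i : ℕ) (d : Fin n → α) :
    prefixProb T i d ≤ prefixProb U i d := by
  refine (summable_prefix hT i d).tsum_le_tsum (fun z => ?_) (summable_prefix hU i d)
  split_ifs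
  exacts [h z, le_rfl]

theorem prefixProb_nonneg {α : Type*} {n : ℕ} {T : (Fin n → α) → ℝ} (h : ∀ z, 0 ≤ T z)
    (i : ℕ) (d : Fin n → α) : 0 ≤ prefixProb T i d := by
  refine tsum_nonneg fun z => ?_
  split_ifs
  exacts [h z, le_rfl]

/-- The resetting probabilities for a single coordinate. Here `P > 0` is the `S`-probability of the
prefix, `G` and `g a` are the sums of `S·f` over the prefix and over its extension by `a`, so that
`G / P` and `g a / (D a * P)` are the conditional means of `f`. -/
theorem exists_resetting {α : Type*} (D : α → ℝ) (hD0 : ∀ a, 0 ≤ D a) (hD1 : HasSum D 1)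
    {p P G : ℝ} (hp : 0 < p) (hP : 0 < P) (hG : 0 ≤ G) (g : α → ℝ) (hg0 : ∀ a, 0 ≤ g a)
    (hg1 : ∀ a, g a ≤ D a * P) (hg : HasSum g G) :
    ∃ ρ : α → ℝ, (∀ a, ρ a ∈ Set.Icc (0 : ℝ) 1) ∧
      ∀ a, (D a * P + p * g a) / (P + p * G)
        = D a * (1 - p * ρ a + p * ∑' a', D a' * ρ a') := by
  have hden : 0 < P + p * G := by positivity
  -- `ρ a = (1 - m_a) / (1 + p m)`; where `D a = 0` the junk value `m_a = 0` is harmless.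
  let ρ : α → ℝ := fun a => (1 - g a / (D a * P)) * (P / (P + p * G))
  have hDρ : ∀ a, D a * ρ a = (D a * P - g a) / (P + p * G) := by
    intro a
    rcases (hD0 a).eq_or_lt with h | h
    · have h1 := hg1 a
      rw [← h, zero_mul] at h1
      simp [← h, le_antisymm h1 (hg0 a)]
    · simp only [ρ]
      field_simp
  have hsum : ∑' a, D a * ρ a = (P - G) / (P + p * G) := by
    simp_rw [hDρ]
    simpa using (((hD1.mul_right P).sub hg).div_const (P + p * G)).tsum_eq
  refine ⟨ρ, fun a => ?_, fun a => ?_⟩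
  · have h1 : 0 ≤ g a / (D a * P) := div_nonneg (hg0 a) (mul_nonneg (hD0 a) hP.le)
    have h2 : g a / (D a * P) ≤ 1 := div_le_one_of_le₀ (hg1 a) (mul_nonneg (hD0 a) hP.le)
    have h3 : P / (P + p * G) ≤ 1 := div_le_one_of_le₀ (by nlinarith) hden.le
    exact ⟨mul_nonneg (by linarith) (by positivity),
      mul_le_one₀ (by linarith) (by positivity) h3⟩
  · have : D a * (1 - p * ρ a + p * ∑' a', D a' * ρ a')
        = D a - p * (D a * ρ a) + D a * p * ∑' a', D a' * ρ a' := by ring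
    rw [this, hDρ, hsum]
    field_simp
    ring

/-- Information-theoretic p-resetting biasing theorem:
for any PMF `D` on a countable `α`, any `p ∈ (0,1)` and any `f : α^n → [0,1]`
with mean `μ` and variance `ν` under `S = D^n`, there is a PMF `Ŝ` on `α^n`
supported inside the support of `D^n` such that for each coordinate `i` and
each prefix of positive probability there is a resetting probability function
`ρ : α → [0,1]` with conditional probabilities
`D(d)·(1 − p·ρ(d) + p·E_{d'←D}[ρ(d')])` (so `Ŝ` is achievable by a p-resetting
attack), and whose expectation of `f` is at least `μ + p·ν/(1 + p·μ)`. -/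
theorem pRes_biasing_information_theoretic {α : Type*} [Countable α]
    (D : α → ℝ) (hD0 : ∀ a, 0 ≤ D a) (hD1 : HasSum D 1)
    (n : ℕ) (p : ℝ) (hp : p ∈ Set.Ioo (0 : ℝ) 1)
    (f : (Fin n → α) → ℝ) (hf : ∀ z, f z ∈ Set.Icc (0 : ℝ) 1)
    (S : (Fin n → α) → ℝ) (hS : S = fun z => ∏ j, D (z j))
    (μ ν : ℝ) (hμ : μ = ∑' z, S z * f z)
    (hν : ν = (∑' z, S z * (f z) ^ 2) - μ ^ 2) :
    ∃ Shat : (Fin n → α) → ℝ,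
      (∀ z, 0 ≤ Shat z) ∧ HasSum Shat 1 ∧
      (∀ z, Shat z ≠ 0 → S z ≠ 0) ∧
      (∀ i : ℕ, ∀ hi1 : 1 ≤ i, ∀ hi2 : i ≤ n, ∀ d : Fin n → α,
        0 < prefixProb Shat (i - 1) d →
          ∃ ρ : α → ℝ, (∀ a, ρ a ∈ Set.Icc (0 : ℝ) 1) ∧
            ∀ a : α,
              prefixProb Shat i (Function.update d ⟨i - 1, by omega⟩ a) /
                  prefixProb Shat (i - 1) d
                = D a * (1 - p * ρ a + p * ∑' a' : α, D a' * ρ a')) ∧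
      μ + p * ν / (1 + p * μ) ≤ ∑' z, Shat z * f z := by
  obtain ⟨hp0, -⟩ := hp
  have hS0 : ∀ z, 0 ≤ S z := fun z => by
    rw [hS]; exact Finset.prod_nonneg fun j _ => hD0 _
  have hS1 : HasSum S 1 := by
    rw [hS]
    simpa using hasSum_pi_prod (n := n) (fun _ => D) (fun _ => 1) (fun _ => hD0) (fun _ => hD1)
  have hSf0 : ∀ z, 0 ≤ S z * f z := fun z => mul_nonneg (hS0 z) (hf z).1
  have hSf1 : ∀ z, S z * f z ≤ S z := fun z => mul_le_of_le_one_right (hS0 z) (hf z).2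
  have hSf : Summable (fun z => S z * f z) := hS1.summable.of_nonneg_of_le hSf0 hSf1
  have hSff : Summable (fun z => S z * f z ^ 2) :=
    hS1.summable.of_nonneg_of_le (fun z => mul_nonneg (hS0 z) (sq_nonneg _))
      (fun z => mul_le_of_le_one_right (hS0 z) (pow_le_one₀ (hf z).1 (hf z).2))
  have hμ0 : 0 ≤ μ := hμ ▸ tsum_nonneg hSf0
  have hden : 0 < 1 + p * μ := by positivity
  have hμs : HasSum (fun z => S z * f z) μ := hμ ▸ hSf.hasSum
  have hpre : ∀ i d, prefixProb (fun z => (S z + p * (S z * f z)) / (1 + p * μ)) i d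
      = (prefixProb S i d + p * prefixProb (fun z => S z * f z) i d) / (1 + p * μ) := by
    intro i d
    have h := (((summable_prefix hS1.summable i d).hasSum.add
      ((summable_prefix hSf i d).hasSum.mul_left p)).div_const (1 + p * μ)).tsum_eq
    unfold prefixProb
    rw [← h]
    refine tsum_congr fun z => ?_
    split_ifs <;> simp
  refine ⟨fun z => (S z + p * (S z * f z)) / (1 + p * μ), fun z => ?_, ?_, fun z hz h => ?_, ?_, ?_⟩
  · exact div_nonneg (add_nonneg (hS0 z) (mul_nonneg hp0.le (hSf0 z))) hden.le
  · simpa [div_self hden.ne'] using (hS1.add (hμs.mul_left p)).div_const (1 + p * μ)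
  · simp [h] at hz
  · intro i hi1 hi2 d hd
    obtain ⟨i, rfl⟩ : ∃ k, i = k + 1 := ⟨i - 1, by omega⟩
    simp only [Nat.add_sub_cancel] at hd ⊢
    let k : Fin n := ⟨i, by omega⟩
    have hG := prefixProb_nonneg hSf0 i d
    have hGP := prefixProb_mono hSf hS1.summable hSf1 i d
    have hPa : ∀ a, prefixProb S (i + 1) (Function.update d k a) = D a * prefixProb S i d := by
      intro a
      rw [hS]
      exact prefixProb_prod_update D hD0 hD1 k d a
    have hP : 0 < prefixProb S i d := by
      refine lt_of_le_of_ne (hG.trans hGP) fun h => ?_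
      have hG' : prefixProb (fun z => S z * f z) i d = 0 := le_antisymm (h ▸ hGP) hG
      rw [hpre, ← h, hG'] at hd
      simp at hd
    obtain ⟨ρ, hρ, h⟩ := exists_resetting D hD0 hD1 hp0 hP hG
      (fun a => prefixProb (fun z => S z * f z) (i + 1) (Function.update d k a))
      (fun a => prefixProb_nonneg hSf0 _ _)
      (fun a => hPa a ▸ prefixProb_mono hSf hS1.summable hSf1 _ _)
      (hasSum_prefixProb_update hSf k d)
    refine ⟨ρ, hρ, fun a => ?_⟩
    rw [← h a, hpre, hpre, div_div_div_cancel_right₀ hden.ne', ← hPa a]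
  · have h := ((hμs.add (hSff.hasSum.mul_left p)).div_const (1 + p * μ)).tsum_eq
    have h' : ∑' z, (S z + p * (S z * f z)) / (1 + p * μ) * f z
        = (μ + p * ∑' z, S z * f z ^ 2) / (1 + p * μ) := by
      rw [← h]
      exact tsum_congr fun z => by ring
    rw [h', hν]
    refine le_of_eq ?_
    field_simp
    ring
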